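/- Let (e_1, ..., e_n) be a fan in a 3-connected matroid M with n >= 4. Let e be an element of E(M) − {e_1, ..., e_n} such that there is a triangle T of M with e ∈ T ⊆ {e, e_1, ..., e_n}. Then one of the following holds: (i) T = {e, e_1, e_2}, e_1 is a rim element, and (e, e_1, ..., e_n) is a fan; (ii) T = {e, e_{n−1}, e_n}, e_n is a rim element, and (e_1, ..., e_n, e) is a fan; (iii) T = {e, e_1, e_n}, and e_1 and e_n are spoke elements; (iv) T = {e, e_2, e_4}, e_2 is a rim element, and n <= 5; (v) T = {e, e_{n−1}, e_{n−3}}, e_{n−1} is a rim element, and n <= 5. -/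

import Mathlib

/-!
Write `T = {x, e p, e q}`. A circuit and a cocircuit never meet in exactly one element, so every
triad of the fan contains both or neither of `e p` and `e q`.

* If `e p` is a spoke with `1 < p < n`, then the triad around it contains `e q`, so `q = p ± 1`.
  Unless `e q` is an end of the fan, `e p` and `e q` span a fan triangle with a third element `c`.
  Eliminating `e q` from it and `T` yields a circuit `C ⊆ {x, e p, c}`, which avoids `e p` because
  `e p` would be its only element in the triad around `e p`. So `x` and `c` are parallel.
* A terminal spoke lies in no triad of the fan, whereas each rim element does, as `n ≥ 4`. So a
  terminal spoke can only be paired with the other terminal spoke.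
* Two rim elements that lie in the same triads of the fan are `e 1`, `e 3` with `n = 4`, or
  `e 2`, `e 4` with `n ≤ 5`.
-/

open Matroid Set

universe u

variable {α : Type u}

namespace PaperDefs

/-- Deletion of a set of elements from a matroid. -/
def mdel (M : Matroid α) (D : Set α) : Matroid α := M ↾ (M.E \ D)

/-- Contraction of a set of elements in a matroid. -/
def mcon (M : Matroid α) (C : Set α) : Matroid α := (mdel M✶ C)✶

/-- A circuit: a minimal dependent set. -/
def IsCircuit (M : Matroid α) (C : Set α) : Prop :=
  M.Dep C ∧ ∀ X, X ⊂ C → M.Indep X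

/-- A triangle: a 3-element circuit. -/
def IsTriangle (M : Matroid α) (T : Set α) : Prop :=
  IsCircuit M T ∧ T.encard = 3

/-- A triad: a 3-element cocircuit. -/
def IsTriad (M : Matroid α) (T : Set α) : Prop := IsTriangle M✶ T

/-- The (extended natural number) rank of a set in a matroid: the supremum of the
cardinalities of its independent subsets. -/
noncomputable def erk (M : Matroid α) (X : Set α) : ℕ∞ :=
  ⨆ I ∈ {I : Set α | M.Indep I ∧ I ⊆ X}, I.encard

/-- Two elements are connected if they are equal or lie in a common circuit. -/
def ConnTo (M : Matroid α) (e f : α) : Prop :=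
  (e = f ∧ e ∈ M.E) ∨ ∃ C, IsCircuit M C ∧ e ∈ C ∧ f ∈ C

/-- A matroid is connected if its ground set is nonempty and every two of its elements
are connected. -/
def Conn (M : Matroid α) : Prop :=
  M.E.Nonempty ∧ ∀ e ∈ M.E, ∀ f ∈ M.E, ConnTo M e f

/-- A 2-separation of a matroid: a partition `(X, Y)` of the ground set with both sides
of size at least two and `r(X) + r(Y) - r(M) ≤ 1`. -/
def TwoSep (M : Matroid α) (X Y : Set α) : Prop :=
  X ∪ Y = M.E ∧ Disjoint X Y ∧ 2 ≤ X.encard ∧ 2 ≤ Y.encard ∧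
    erk M X + erk M Y ≤ erk M M.E + 1

/-- A matroid is 3-connected if it is connected and has no 2-separation. -/
def ThreeConn (M : Matroid α) : Prop :=
  Conn M ∧ ∀ X Y, ¬ TwoSep M X Y

/-- A matroid is 3-connected up to series and parallel sets if it is connected and, for
every 2-separation `(X, Y)`, `min {r X, r Y} = 1` or `min {r✶ X, r✶ Y} = 1`. -/
def ThreeConnUpToSP (M : Matroid α) : Prop :=
  Conn M ∧ ∀ X Y, TwoSep M X Y →
    min (erk M X) (erk M Y) = 1 ∨ min (erk M✶ X) (erk M✶ Y) = 1

/-- `N` is a minor of `M`: it is obtained from `M` by contracting a set `C` and deleting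
a disjoint set `D`. -/
def IsMinor (N M : Matroid α) : Prop :=
  ∃ C D, C ⊆ M.E ∧ D ⊆ M.E ∧ Disjoint C D ∧ N = mdel (mcon M C) D

/-- `M` is isomorphic to `N`: there is a bijection between the ground sets under which
independence corresponds. -/
def IsoTo (M N : Matroid α) : Prop :=
  ∃ f : α → α, Set.BijOn f M.E N.E ∧ ∀ I, I ⊆ M.E → (M.Indep I ↔ N.Indep (f '' I))

/-- The cyclic interval `{i, i+1, ..., j-1}` in `ZMod r`. -/
def cycArc (r : ℕ) (i j : ZMod r) : Set (ZMod r) :=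
  {k | ∃ m : ℕ, m < (j - i).val ∧ k = i + (m : ZMod r)}

/-- `M` is (isomorphic to) a rank-`r` wheel for some `r ≥ 2`, i.e. the cycle matroid of
the wheel graph with `r` spokes: there is a labelling of the ground set by spokes `s i`
and rim elements `w i` so that the circuits of `M` are precisely the rim together with
the sets consisting of two spokes and the rim elements of one of the two arcs joining
them. -/
def IsWheel (M : Matroid α) : Prop :=
  ∃ r : ℕ, 2 ≤ r ∧ ∃ s w : ZMod r → α,
    Function.Injective (Sum.elim s w) ∧
    M.E = Set.range s ∪ Set.range w ∧
    ∀ C, IsCircuit M C ↔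
      (C = Set.range w ∨
        ∃ i j : ZMod r, i ≠ j ∧ C = {s i, s j} ∪ w '' cycArc r i j)

/-- `M` is (isomorphic to) a rank-`r` whirl for some `r ≥ 2`: obtained from the rank-`r`
wheel by relaxing the rim circuit; its circuits are the two-spokes-plus-arc circuits of
the wheel together with the sets consisting of the whole rim and a single spoke. -/
def IsWhirl (M : Matroid α) : Prop :=
  ∃ r : ℕ, 2 ≤ r ∧ ∃ s w : ZMod r → α,
    Function.Injective (Sum.elim s w) ∧
    M.E = Set.range s ∪ Set.range w ∧
    ∀ C, IsCircuit M C ↔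
      ((∃ i : ZMod r, C = insert (s i) (Set.range w)) ∨
        ∃ i j : ZMod r, i ≠ j ∧ C = {s i, s j} ∪ w '' cycArc r i j)

/-- A triangle if `b = true`, a triad if `b = false`. -/
def TriOrTriad (M : Matroid α) (b : Bool) (T : Set α) : Prop :=
  cond b (IsTriangle M T) (IsTriad M T)

/-- The alternation pattern of a fan, recorded as a list: position `i` (zero-based)
carries a spoke element iff `fanBool b i = true`, where `b` records whether the first
triple of the fan is a triangle. -/
def fanBool (b : Bool) (i : ℕ) : Bool := if i % 2 = 0 then b else !b

/-- `F` is a fan of `M` whose first triple is a triangle if `b = true` (so that the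
first element is a spoke element) and a triad if `b = false`: a list of at least three
distinct elements of the ground set in which every three consecutive elements form
alternately triangles and triads. -/
def IsFanWith (M : Matroid α) (b : Bool) (F : List α) : Prop :=
  3 ≤ F.length ∧ F.Nodup ∧ (∀ x ∈ F, x ∈ M.E) ∧
  ∀ (l₁ : List α) (x y z : α) (l₂ : List α), F = l₁ ++ x :: y :: z :: l₂ →
    TriOrTriad M (fanBool b l₁.length) {x, y, z}

/-- `F` is a fan of `M`. -/
def IsFan (M : Matroid α) (F : List α) : Prop := ∃ b, IsFanWith M b F

/-- `F` is consistent with `F'`: `F` is a (not necessarily contiguous) subsequence of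
`F'` or of its reversal. -/
def Consistent (F F' : List α) : Prop := F.Sublist F' ∨ F.Sublist F'.reverse

/-- A finite family of lists is pairwise disjoint. -/
def PairwiseDisjointLists (𝓕 : Finset (List α)) : Prop :=
  ∀ F ∈ 𝓕, ∀ G ∈ 𝓕, F ≠ G → ∀ x ∈ F, x ∉ G

/-- `𝓕` is a covering family of `M'` relative to `N` and `FN`: a family of pairwise
disjoint fans of `M'`, of the same size as `FN`, such that every fan of `FN` is
consistent with a member of `𝓕` and every element of `E(M') - E(N)` lies in a member
of `𝓕`. -/
def CoveringFamily (N : Matroid α) (FN : Finset (List α)) (M' : Matroid α)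
    (𝓕 : Finset (List α)) : Prop :=
  (∀ F ∈ 𝓕, IsFan M' F) ∧ PairwiseDisjointLists 𝓕 ∧ 𝓕.card = FN.card ∧
  (∀ F ∈ FN, ∃ F' ∈ 𝓕, Consistent F F') ∧
  (∀ x ∈ M'.E \ N.E, ∃ F ∈ 𝓕, x ∈ F)

/-- `M` is obtained from `M'` by a fan-lengthening move on the fan `F₀` of `M'`,
producing the fan `F` of `M`: either `M' = M \ e₁` where `e₁` is a terminal spoke
element of `F`, or `M' = M / e₁` where `e₁` is a terminal rim element of `F`, or
(when `F` has at least five elements) `M' = M / eᵢ \ eᵢ₊₁` for a rim element `eᵢ`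
of `F` with `1 ≤ i ≤ n - 1`; in each case `M` and `M'` are 3-connected and `F₀` is
the corresponding shortened fan. -/
def FanLengthen (M' M : Matroid α) (F₀ F : List α) : Prop :=
  ThreeConn M ∧ 4 ≤ F.length ∧ IsFan M' F₀ ∧
  ∃ b, IsFanWith M b F ∧
    ((∃ e F', F = e :: F' ∧ b = true ∧ M' = mdel M {e} ∧ ThreeConn M' ∧ F₀ = F') ∨
     (∃ e F', F = e :: F' ∧ b = false ∧ M' = mcon M {e} ∧ ThreeConn M' ∧ F₀ = F') ∨
     (5 ≤ F.length ∧ ∃ (l₁ : List α) (x y : α) (l₂ : List α),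
        F = l₁ ++ x :: y :: l₂ ∧ fanBool b l₁.length = false ∧
        M' = mdel (mcon M {x}) {y} ∧ ThreeConn M' ∧ F₀ = l₁ ++ l₂))

/-- The fan-extensions of `N` relative to the family `FN` of fans of `N`: the smallest
collection of matroids containing `N` and closed under fan-lengthening moves performed
on fans belonging to covering families. -/
inductive FanExt (N : Matroid α) (FN : Finset (List α)) : Matroid α → Prop
  | base : FanExt N FN N
  | step (M' M : Matroid α) (𝓕 : Finset (List α)) (F₀ F : List α) :
      FanExt N FN M' → CoveringFamily N FN M' 𝓕 → F₀ ∈ 𝓕 →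
      FanLengthen M' M F₀ F → FanExt N FN M

/-- The covering family `𝓕` of `M` admits a fan-shortening move: there are a matroid
`M'` having `N` as a minor and a fan `F₀` of `M'` such that `M` is obtained from `M'`
by a fan-lengthening move on `F₀` producing a fan that belongs to `𝓕`. -/
def AdmitsFanShortening (N M : Matroid α) (𝓕 : Finset (List α)) : Prop :=
  ∃ (M' : Matroid α) (F₀ F : List α), IsMinor N M' ∧ F ∈ 𝓕 ∧ FanLengthen M' M F₀ F

/-- The alternation pattern of a fan presented as a function with one-based indices:
position `i` carries a spoke element iff `posBool b i = true`, where `b` records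
whether the first triple of the fan is a triangle. -/
def posBool (b : Bool) (i : ℕ) : Bool := if i % 2 = 1 then b else !b

/-- `(e 1, ..., e n)` is a fan of `M` whose first triple is a triangle if `b = true`
(so that `e 1` is a spoke element) and a triad if `b = false`: at least three distinct
elements of the ground set in which every three consecutive elements form alternately
triangles and triads. -/
def IsFanFun (M : Matroid α) (b : Bool) (n : ℕ) (e : ℕ → α) : Prop :=
  3 ≤ n ∧ (∀ i j, 1 ≤ i → i ≤ n → 1 ≤ j → j ≤ n → e i = e j → i = j) ∧
  (∀ i, 1 ≤ i → i ≤ n → e i ∈ M.E) ∧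
  ∀ i, 1 ≤ i → i + 2 ≤ n → TriOrTriad M (posBool b i) {e i, e (i+1), e (i+2)}

/-- The set of elements of the fan `(e 1, ..., e n)`. -/
def fanSet (n : ℕ) (e : ℕ → α) : Set α := {a | ∃ i, 1 ≤ i ∧ i ≤ n ∧ a = e i}

/-- The set of rim elements of the fan `(e 1, ..., e n)` with alternation pattern `b`. -/
def rimSet (b : Bool) (n : ℕ) (e : ℕ → α) : Set α :=
  {a | ∃ i, 1 ≤ i ∧ i ≤ n ∧ posBool b i = false ∧ a = e i}

/-- `M` is representable over the field `𝔽`. -/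
def RepOver (M : Matroid α) (𝔽 : Type*) [Field 𝔽] : Prop :=
  ∃ f : α → (α → 𝔽),
    ∀ I : Set α, I ⊆ M.E → (M.Indep I ↔ LinearIndependent 𝔽 (fun x : I => f (x : α)))

/-- `M` has a minor isomorphic to a member of `𝓢`. -/
def HasSMinor (𝓢 : Set (Matroid α)) (M : Matroid α) : Prop :=
  ∃ S ∈ 𝓢, ∃ N, IsMinor N M ∧ IsoTo N S

/-- `M` is `𝓢`-fragile: for every element `e` of `M`, at least one of `M \ e` and
`M / e` has no `𝓢`-minor. -/
def SFragile (𝓢 : Set (Matroid α)) (M : Matroid α) : Prop :=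
  ∀ e ∈ M.E, ¬ HasSMinor 𝓢 (mdel M {e}) ∨ ¬ HasSMinor 𝓢 (mcon M {e})

end PaperDefs

open PaperDefs

namespace PaperDefs

lemma IsTriangle.isCircuit {M : Matroid α} {T : Set α} (hT : IsTriangle M T) : M.IsCircuit T :=
  isCircuit_iff_forall_ssubset.2 hT.1

lemma IsTriad.isCocircuit {M : Matroid α} {T : Set α} (hT : IsTriad M T) : M.IsCocircuit T :=
  IsTriangle.isCircuit hT

lemma erk_eq_eRk (M : Matroid α) (X : Set α) : erk M X = M.eRk X := by
  refine le_antisymm (iSup₂_le fun I hI => hI.1.encard_le_eRk_of_subset hI.2) ?_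
  obtain ⟨I, hIX, hI, hcard⟩ := le_eRk_iff.1 (le_refl (M.eRk X))
  exact hcard ▸ le_iSup₂_of_le I ⟨hI, hIX⟩ le_rfl

lemma ThreeConn.indep_pair {M : Matroid α} (hM : ThreeConn M) (hE : 4 ≤ M.E.encard) {x y : α}
    (hx : x ∈ M.E) (hy : y ∈ M.E) (hxy : x ≠ y) : M.Indep {x, y} := by
  by_contra hdep
  have hsub : ({x, y} : Set α) ⊆ M.E := pair_subset hx hy
  have hcompl : 2 ≤ (M.E \ {x, y}).encard := by
    rw [← encard_sdiff_add_encard_of_subset hsub, encard_pair hxy] at hE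
    exact (ENat.add_le_add_iff_right (by simp)).1 (le_of_eq_of_le (by norm_num) hE)
  have hrank : M.eRk {x, y} ≤ 1 := by
    have hlt := eRk_lt_encard_of_dep_of_finite (toFinite _) ((not_indep_iff hsub).1 hdep)
    rw [encard_pair hxy, ← one_add_one_eq_two] at hlt
    exact Order.le_of_lt_add_one hlt
  refine hM.2 {x, y} (M.E \ {x, y})
    ⟨union_sdiff_cancel hsub, disjoint_sdiff_right, (encard_pair hxy).ge, hcompl, ?_⟩
  simp only [erk_eq_eRk]
  rw [add_comm]
  exact add_le_add (M.eRk_mono sdiff_subset) hrank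

lemma not_indep_pair_of_isCircuit_of_isCocircuit {M : Matroid α} {K : Set α} {x a b c : α}
    (h₁ : M.IsCircuit {x, a, b}) (h₂ : M.IsCircuit {a, b, c}) (hx : x ∉ ({a, b, c} : Set α))
    (hK : M.IsCocircuit K) (haK : a ∈ K) (hxK : x ∉ K) (hcK : c ∉ K) : ¬ M.Indep {x, c} := by
  obtain ⟨C, hCsub, hC, hxC⟩ := h₁.strong_elimination h₂ (e := b) (by simp) (by simp)
    (mem_insert x _) hx
  have hCxac : ∀ z ∈ C, z = x ∨ z = a ∨ z = c := fun z hz => by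
    have := hCsub hz
    simp only [mem_sdiff, mem_union, mem_insert_iff, mem_singleton_iff] at this
    tauto
  have haC : a ∉ C := fun haC => hC.inter_isCocircuit_ne_singleton hK (e := a) <| by
    refine subset_antisymm (fun z ⟨hzC, hzK⟩ => ?_) (singleton_subset_iff.2 ⟨haC, haK⟩)
    obtain rfl | rfl | rfl := hCxac z hzC
    exacts [absurd hzK hxK, rfl, absurd hzK hcK]
  refine fun hxc => hC.not_indep (hxc.subset fun z hz => ?_)
  obtain rfl | rfl | rfl := hCxac z hz
  exacts [mem_insert z _, absurd hz haC, by simp]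

lemma posBool_eq_true_iff {b : Bool} {k : ℕ} : posBool b k = true ↔ k % 2 = b.toNat := by
  cases b <;> grind [posBool]

lemma posBool_eq_false_iff {b : Bool} {k : ℕ} : posBool b k = false ↔ k % 2 ≠ b.toNat := by
  rw [← Bool.not_eq_true, posBool_eq_true_iff]

lemma fanSet_eq_image (n : ℕ) (e : ℕ → α) : fanSet n e = e '' Icc 1 n := by
  ext a
  simp only [fanSet, mem_ofPred_eq, mem_image, mem_Icc, and_assoc, eq_comm]

lemma notMem_image_Icc_of_notMem_fanSet {n : ℕ} {e : ℕ → α} {x : α} (hxF : x ∉ fanSet n e)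
    {i j : ℕ} (hi : 1 ≤ i) (hj : j ≤ n) : x ∉ e '' Icc i j := by
  rw [fanSet_eq_image] at hxF
  exact fun hx => hxF (image_mono (Icc_subset_Icc hi hj) hx)

lemma exists_eq_insert_pair_of_subset_insert_fanSet {n : ℕ} {e : ℕ → α} {x : α} {T : Set α}
    (hT : T.encard = 3) (hxT : x ∈ T) (hTsub : T ⊆ insert x (fanSet n e)) :
    ∃ p q, 1 ≤ p ∧ p < q ∧ q ≤ n ∧ T = {x, e p, e q} := by
  have hcard : (T \ {x}).encard = 2 := by
    rw [encard_sdiff_singleton_of_mem hxT, hT]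
    rfl
  obtain ⟨y, z, hyz, hpair⟩ := encard_eq_two.1 hcard
  obtain rfl : T = {x, y, z} := by rw [← hpair, insert_sdiff_self_of_mem hxT]
  have hfan : ({y, z} : Set α) ⊆ fanSet n e := by
    rw [← hpair]
    exact sdiff_singleton_subset_iff.2 hTsub
  obtain ⟨i, hi, hin, rfl⟩ := hfan (mem_insert y _)
  obtain ⟨j, hj, hjn, rfl⟩ := hfan (mem_insert_of_mem _ rfl)
  rcases lt_trichotomy i j with hij | rfl | hji
  · exact ⟨i, j, hi, hij, hjn, rfl⟩
  · exact absurd rfl hyz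
  · exact ⟨j, i, hj, hji, hin, by rw [pair_comm]⟩

namespace IsFanFun

variable {M : Matroid α} {b : Bool} {n : ℕ} {e : ℕ → α} {x : α} {k p q r : ℕ}

lemma injOn (hfan : IsFanFun M b n e) : InjOn e (Icc 1 n) :=
  fun i hi j hj hij => hfan.2.1 i j hi.1 hi.2 hj.1 hj.2 hij

lemma fanSet_subset_ground (hfan : IsFanFun M b n e) : fanSet n e ⊆ M.E := by
  rintro _ ⟨i, hi, hin, rfl⟩
  exact hfan.2.2.1 i hi hin

lemma encard_fanSet (hfan : IsFanFun M b n e) : (fanSet n e).encard = n := by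
  rw [fanSet_eq_image, hfan.injOn.encard_image, ← Finset.coe_Icc, encard_coe_eq_coe_finsetCard,
    Nat.card_Icc, Nat.add_sub_cancel]

lemma isTriangle (hfan : IsFanFun M b n e) (hk : 1 ≤ k) (hkn : k + 2 ≤ n)
    (hspoke : posBool b k = true) : IsTriangle M {e k, e (k + 1), e (k + 2)} := by
  simpa only [hspoke, TriOrTriad, cond_true] using hfan.2.2.2 k hk hkn

lemma isCocircuit_image_Icc (hfan : IsFanFun M b n e) (hk : 1 ≤ k) (hkn : k + 2 ≤ n)
    (hrim : posBool b k = false) : M.IsCocircuit (e '' Icc k (k + 2)) := by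
  have htriad : IsTriad M {e k, e (k + 1), e (k + 2)} := by
    simpa only [hrim, TriOrTriad, cond_false] using hfan.2.2.2 k hk hkn
  have hIcc : Icc k (k + 2) = {k, k + 1, k + 2} := by
    ext i
    simp only [mem_Icc, mem_insert_iff, mem_singleton_iff]
    omega
  rw [hIcc, image_insert_eq, image_pair]
  exact htriad.isCocircuit

lemma mem_image_Icc_iff (hfan : IsFanFun M b n e) (hk : 1 ≤ k) (hkn : k + 2 ≤ n)
    (hp : p ∈ Icc 1 n) : e p ∈ e '' Icc k (k + 2) ↔ p ∈ Icc k (k + 2) :=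
  hfan.injOn.mem_image_iff (Icc_subset_Icc hk hkn) hp

lemma mem_Icc_of_isCircuit (hfan : IsFanFun M b n e) (hxF : x ∉ fanSet n e)
    (hT : M.IsCircuit {x, e p, e q}) (hq : q ∈ Icc 1 n) (hk : 1 ≤ k) (hkn : k + 2 ≤ n)
    (hrim : posBool b k = false) (hpk : p ∈ Icc k (k + 2)) : q ∈ Icc k (k + 2) := by
  by_contra hqk
  refine hT.inter_isCocircuit_ne_singleton (hfan.isCocircuit_image_Icc hk hkn hrim) (e := e p) ?_
  rw [insert_inter_of_notMem (notMem_image_Icc_of_notMem_fanSet hxF hk hkn),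
    insert_inter_of_mem (mem_image_of_mem e hpk),
    singleton_inter_eq_empty.2 (mt (hfan.mem_image_Icc_iff hk hkn hq).1 hqk),
    insert_empty_eq]

lemma not_isCircuit_of_spoke (hfan : IsFanFun M b n e) (hxF : x ∉ fanSet n e)
    (hpar : ∀ y ∈ fanSet n e, M.Indep {x, y}) (hT : M.IsCircuit {x, e (k + 1), e q})
    (hk : 1 ≤ k) (hkn : k + 2 ≤ n) (hrim : posBool b k = false) (hq : q ∈ Icc 1 n)
    (hr : r ∈ Icc 1 n) (hrk : r ∉ Icc k (k + 2)) : ¬ M.IsCircuit {e (k + 1), e q, e r} := by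
  have mem_fanSet : ∀ {i}, i ∈ Icc 1 n → e i ∈ fanSet n e := fun hi =>
    fanSet_eq_image n e ▸ mem_image_of_mem e hi
  have hx : x ∉ ({e (k + 1), e q, e r} : Set α) := by
    rintro (rfl | rfl | rfl)
    exacts [hxF (mem_fanSet ⟨by omega, by omega⟩), hxF (mem_fanSet hq), hxF (mem_fanSet hr)]
  exact fun hC => not_indep_pair_of_isCircuit_of_isCocircuit hT hC hx
    (hfan.isCocircuit_image_Icc hk hkn hrim) (mem_image_of_mem e ⟨by omega, by omega⟩)
    (notMem_image_Icc_of_notMem_fanSet hxF hk hkn)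
    (mt (hfan.mem_image_Icc_iff hk hkn hr).1 hrk) (hpar _ (mem_fanSet hr))

lemma eq_end_of_interior_spoke (hfan : IsFanFun M b n e) (hxF : x ∉ fanSet n e)
    (hpar : ∀ y ∈ fanSet n e, M.Indep {x, y}) (hT : M.IsCircuit {x, e p, e q})
    (hq : q ∈ Icc 1 n) (hpq : p ≠ q) (hspoke : posBool b p = true) (hp : 1 < p) (hpn : p < n) :
    p = 2 ∧ q = 1 ∨ p + 1 = n ∧ q = n := by
  obtain ⟨k, rfl⟩ : ∃ k, p = k + 1 := ⟨p - 1, by omega⟩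
  have hk : 1 ≤ k := by omega
  have hrim : posBool b k = false := by
    rw [posBool_eq_true_iff] at hspoke
    rw [posBool_eq_false_iff]
    omega
  have hqk := hfan.mem_Icc_of_isCircuit hxF hT hq hk hpn hrim ⟨by omega, by omega⟩
  by_contra hend
  obtain rfl | rfl : q = k ∨ q = k + 2 := by
    simp only [mem_Icc] at hqk
    omega
  · obtain ⟨r, rfl⟩ : ∃ r, q = r + 1 := ⟨q - 1, by omega⟩
    have hr_spoke : posBool b r = true := by
      rw [posBool_eq_true_iff] at hspoke ⊢
      omega
    refine hfan.not_isCircuit_of_spoke (r := r) hxF hpar hT hk hpn hrim hq ⟨by omega, by omega⟩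
      (fun hr => by simp only [mem_Icc] at hr; omega) ?_
    rw [insert_comm, pair_comm, insert_comm]
    exact (hfan.isTriangle (by omega) (by omega) hr_spoke).isCircuit
  · exact hfan.not_isCircuit_of_spoke (r := k + 3) hxF hpar hT hk hpn hrim hq
      ⟨by omega, by omega⟩ (fun hr => by simp only [mem_Icc] at hr; omega)
      (hfan.isTriangle (by omega) (by omega) hspoke).isCircuit

lemma interior_of_spoke_of_rim (hfan : IsFanFun M b n e) (hn : 4 ≤ n) (hxF : x ∉ fanSet n e)
    (hT : M.IsCircuit {x, e p, e q}) (hp : p ∈ Icc 1 n) (hq : q ∈ Icc 1 n)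
    (hspoke : posBool b p = true) (hrim : posBool b q = false) : 1 < p ∧ p < n := by
  obtain ⟨k, hk, hkn, hk_rim, hqk⟩ :
      ∃ k, 1 ≤ k ∧ k + 2 ≤ n ∧ posBool b k = false ∧ q ∈ Icc k (k + 2) := by
    simp only [posBool_eq_false_iff, mem_Icc] at hrim hq ⊢
    by_cases h : q + 2 ≤ n
    · exact ⟨q, by omega⟩
    · exact ⟨q - 2, by omega⟩
  have hpk : p ∈ Icc k (k + 2) :=
    hfan.mem_Icc_of_isCircuit hxF (pair_comm (e p) (e q) ▸ hT) hp hk hkn hk_rim hqk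
  simp only [posBool_eq_true_iff, posBool_eq_false_iff, mem_Icc] at hspoke hk_rim hpk
  omega

lemma eq_end_of_spoke_of_rim (hfan : IsFanFun M b n e) (hn : 4 ≤ n) (hxF : x ∉ fanSet n e)
    (hpar : ∀ y ∈ fanSet n e, M.Indep {x, y}) (hT : M.IsCircuit {x, e p, e q})
    (hp : p ∈ Icc 1 n) (hq : q ∈ Icc 1 n) (hspoke : posBool b p = true)
    (hrim : posBool b q = false) : p = 2 ∧ q = 1 ∨ p + 1 = n ∧ q = n := by
  obtain ⟨hp₁, hpn⟩ := hfan.interior_of_spoke_of_rim hn hxF hT hp hq hspoke hrim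
  have hpq : p ≠ q := by
    rintro rfl
    simp only [hspoke, Bool.true_eq_false] at hrim
  exact hfan.eq_end_of_interior_spoke hxF hpar hT hq hpq hspoke hp₁ hpn

lemma eq_ends_of_spoke_of_spoke (hfan : IsFanFun M b n e) (hxF : x ∉ fanSet n e)
    (hpar : ∀ y ∈ fanSet n e, M.Indep {x, y}) (hT : M.IsCircuit {x, e p, e q})
    (hp : 1 ≤ p) (hpq : p < q) (hq : q ≤ n) (hp_spoke : posBool b p = true)
    (hq_spoke : posBool b q = true) : p = 1 ∧ q = n := by
  have hparity : p % 2 = q % 2 := by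
    rw [posBool_eq_true_iff.1 hp_spoke, posBool_eq_true_iff.1 hq_spoke]
  constructor
  · by_contra hp_int
    have := hfan.eq_end_of_interior_spoke hxF hpar hT ⟨by omega, hq⟩ hpq.ne hp_spoke
      (by omega) (by omega)
    omega
  · by_contra hq_int
    have := hfan.eq_end_of_interior_spoke hxF hpar (pair_comm (e p) (e q) ▸ hT)
      ⟨hp, by omega⟩ hpq.ne' hq_spoke (by omega) (by omega)
    omega

lemma eq_of_rim_of_rim (hfan : IsFanFun M b n e) (hn : 4 ≤ n) (hxF : x ∉ fanSet n e)
    (hT : M.IsCircuit {x, e p, e q}) (hp : 1 ≤ p) (hpq : p < q) (hq : q ≤ n)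
    (hp_rim : posBool b p = false) (hq_rim : posBool b q = false) :
    p = 2 ∧ q = 4 ∧ n ≤ 5 ∨ p = 1 ∧ q = 3 ∧ n = 4 := by
  have triad_iff : ∀ {k}, 1 ≤ k → k + 2 ≤ n → posBool b k = false →
      (p ∈ Icc k (k + 2) ↔ q ∈ Icc k (k + 2)) := fun hk hkn hrim =>
    ⟨hfan.mem_Icc_of_isCircuit hxF hT ⟨by omega, hq⟩ hk hkn hrim,
      hfan.mem_Icc_of_isCircuit hxF (pair_comm (e p) (e q) ▸ hT) ⟨hp, by omega⟩ hk hkn hrim⟩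
  simp only [posBool_eq_false_iff, mem_Icc] at hp_rim hq_rim triad_iff
  have hb := b.toNat_le
  have hp₂ : p ≤ 2 := by
    by_contra
    have := triad_iff (k := p - 2) (by omega) (by omega) (by omega)
    omega
  have hpq₂ : q = p + 2 := by
    have := triad_iff (k := p) hp (by omega) hp_rim
    omega
  have hqn : n < q + 2 := by
    by_contra
    have := triad_iff (k := q) (by omega) (by omega) hq_rim
    omega
  omega

lemma cons (hfan : IsFanFun M b n e) (hxF : x ∉ fanSet n e) (hT : IsTriangle M {x, e 1, e 2})
    (hrim : posBool b 1 = false) :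
    IsFanFun M (!b) (n + 1) (fun k => if k = 1 then x else e (k - 1)) := by
  obtain ⟨hn, hinj, hE, htriple⟩ := hfan
  have hxe : ∀ i, 1 ≤ i → i ≤ n → x ≠ e i := fun i hi hin h => hxF ⟨i, hi, hin, h⟩
  obtain rfl : b = false := hrim
  refine ⟨by omega, fun i j hi hin hj hjn hij => ?_, fun i hi hin => ?_, fun i hi hin => ?_⟩
  · dsimp only at hij
    split_ifs at hij
    · omega
    · exact absurd hij (hxe _ (by omega) (by omega))
    · exact absurd hij.symm (hxe _ (by omega) (by omega))
    · have := hinj _ _ (by omega) (by omega) (by omega) (by omega) hij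
      omega
  · obtain rfl | hi₁ := eq_or_ne i 1
    · simpa using hT.isCircuit.subset_ground (mem_insert x _)
    · simpa [hi₁] using hE (i - 1) (by omega) (by omega)
  · obtain rfl | hi₁ := eq_or_ne i 1
    · simpa [posBool, TriOrTriad] using hT
    · obtain ⟨k, rfl⟩ : ∃ k, i = k + 1 := ⟨i - 1, by omega⟩
      have hk : k ≠ 0 := by omega
      have hlabel : posBool true (k + 1) = posBool false k := by grind [posBool]
      simpa [hlabel, hk] using htriple k (by omega) (by omega)

lemma snoc (hfan : IsFanFun M b n e) (hxF : x ∉ fanSet n e)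
    (hT : IsTriangle M {x, e (n - 1), e n}) (hrim : posBool b n = false) :
    IsFanFun M b (n + 1) (fun k => if k = n + 1 then x else e k) := by
  obtain ⟨hn, hinj, hE, htriple⟩ := hfan
  have hxe : ∀ i, 1 ≤ i → i ≤ n → x ≠ e i := fun i hi hin h => hxF ⟨i, hi, hin, h⟩
  refine ⟨by omega, fun i j hi hin hj hjn hij => ?_, fun i hi hin => ?_, fun i hi hin => ?_⟩
  · dsimp only at hij
    split_ifs at hij
    · omega
    · exact absurd hij (hxe _ (by omega) (by omega))
    · exact absurd hij.symm (hxe _ (by omega) (by omega))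
    · exact hinj _ _ (by omega) (by omega) (by omega) (by omega) hij
  · obtain rfl | hi₁ := eq_or_ne i (n + 1)
    · simpa using hT.isCircuit.subset_ground (mem_insert x _)
    · simpa [hi₁] using hE i hi (by omega)
  · obtain rfl | hi₁ := eq_or_ne n (i + 1)
    · have hspoke : posBool b i = true := by grind [posBool]
      rw [Nat.add_sub_cancel, insert_comm, pair_comm] at hT
      simpa [TriOrTriad, hspoke, show i ≠ i + 1 + 1 by omega] using hT
    · simpa [show i ≠ n + 1 by omega, show i ≠ n by omega, hi₁.symm] using
        htriple i hi (by omega)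

end IsFanFun

end PaperDefs

theorem statement10_general (M : Matroid α) (b : Bool) (n : ℕ) (e : ℕ → α)
    (hfan : IsFanFun M b n e) (hn : 4 ≤ n) (x : α) (hxF : x ∉ fanSet n e)
    (hpar : ∀ y ∈ fanSet n e, M.Indep {x, y})
    (T : Set α) (hT : IsTriangle M T) (hxT : x ∈ T) (hTsub : T ⊆ insert x (fanSet n e)) :
    (T = {x, e 1, e 2} ∧ posBool b 1 = false ∧
        IsFanFun M (!b) (n + 1) (fun k => if k = 1 then x else e (k - 1))) ∨
    (T = {x, e (n-1), e n} ∧ posBool b n = false ∧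
        IsFanFun M b (n + 1) (fun k => if k = n + 1 then x else e k)) ∨
    (T = {x, e 1, e n} ∧ posBool b 1 = true ∧ posBool b n = true) ∨
    (T = {x, e 2, e 4} ∧ posBool b 2 = false ∧ n ≤ 5) ∨
    (T = {x, e (n-1), e (n-3)} ∧ posBool b (n-1) = false ∧ n ≤ 5) := by
  obtain ⟨p, q, hp, hpq, hq, rfl⟩ :=
    exists_eq_insert_pair_of_subset_insert_fanSet hT.2 hxT hTsub
  have hC : M.IsCircuit {x, e p, e q} := hT.isCircuit
  have hC' : M.IsCircuit {x, e q, e p} := pair_comm (e p) (e q) ▸ hC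
  have hpI : p ∈ Icc 1 n := ⟨hp, by omega⟩
  have hqI : q ∈ Icc 1 n := ⟨by omega, hq⟩
  cases hbp : posBool b p <;> cases hbq : posBool b q
  · obtain ⟨rfl, rfl, hn₅⟩ | ⟨rfl, rfl, rfl⟩ := hfan.eq_of_rim_of_rim hn hxF hC hp hpq hq hbp hbq
    · exact .inr (.inr (.inr (.inl ⟨rfl, hbp, hn₅⟩)))
    · exact .inr (.inr (.inr (.inr ⟨by rw [pair_comm], hbq, by omega⟩)))
  · obtain ⟨rfl, rfl⟩ : q = 2 ∧ p = 1 := by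
      have := hfan.eq_end_of_spoke_of_rim hn hxF hpar hC' hqI hpI hbq hbp
      omega
    exact .inl ⟨rfl, hbp, hfan.cons hxF hT hbp⟩
  · obtain ⟨rfl, rfl⟩ : p = n - 1 ∧ q = n := by
      have := hfan.eq_end_of_spoke_of_rim hn hxF hpar hC hpI hqI hbp hbq
      omega
    exact .inr (.inl ⟨rfl, hbq, hfan.snoc hxF hT hbq⟩)
  · obtain ⟨rfl, rfl⟩ := hfan.eq_ends_of_spoke_of_spoke hxF hpar hC hp hpq hq hbp hbq
    exact .inr (.inr (.inl ⟨rfl, hbp, hbq⟩))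

/-- The possible triangles through a single element outside a fan. -/
theorem statement10 (M : Matroid α) (hM3 : ThreeConn M) (b : Bool) (n : ℕ) (e : ℕ → α)
    (hfan : IsFanFun M b n e) (hn : 4 ≤ n)
    (x : α) (hx : x ∈ M.E) (hxF : x ∉ fanSet n e)
    (T : Set α) (hT : IsTriangle M T) (hxT : x ∈ T)
    (hTsub : T ⊆ insert x (fanSet n e)) :
    (T = {x, e 1, e 2} ∧ posBool b 1 = false ∧
        IsFanFun M (!b) (n + 1) (fun k => if k = 1 then x else e (k - 1))) ∨
    (T = {x, e (n-1), e n} ∧ posBool b n = false ∧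
        IsFanFun M b (n + 1) (fun k => if k = n + 1 then x else e k)) ∨
    (T = {x, e 1, e n} ∧ posBool b 1 = true ∧ posBool b n = true) ∨
    (T = {x, e 2, e 4} ∧ posBool b 2 = false ∧ n ≤ 5) ∨
    (T = {x, e (n-1), e (n-3)} ∧ posBool b (n-1) = false ∧ n ≤ 5) := by
  have hE : 4 ≤ M.E.encard :=
    calc (4 : ℕ∞) ≤ n := by exact_mod_cast hn
      _ = (fanSet n e).encard := hfan.encard_fanSet.symm
      _ ≤ M.E.encard := encard_le_encard hfan.fanSet_subset_ground
  exact statement10_general M b n e hfan hn x hxF (fun y hy => hM3.indep_pair hE hx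
    (hfan.fanSet_subset_ground hy) (ne_of_mem_of_not_mem hy hxF).symm) T hT hxT hTsub
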